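/- For every integer n ≥ 3, with p = 2(n−1)/(n−2), there exists a constant C depending only on n such that for all v ≥ 0 and all w ∈ ℝ with v + w ≥ 0: | ((n−2)/(n−1)) v^p − (n/(n−2)) v^{2/(n−2)} w² + 2 (v+w)^{n/(n−2)} w − ((n−2)/(n−1)) (v+w)^p | ≤ C v^{max{0, p−3}} |w|^{min{p, 3}} + C |w|^p. -/

import Mathlib

/-!
Put `f x = (2 / p) * x ^ p`. The quantity to be estimated is
`f v - f (v + w) + f' (v + w) * w - f'' v * w ^ 2 / 2`. It vanishes at `w = 0`, and in its
derivative in `w` all terms cancel except `w * (f'' (v + w) - f'' v)`. Since `f''` is a multiple of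
`x ^ (p - 2)`, the mean value inequality reduces everything to the modulus of continuity of a real
power: Hölder of exponent `p - 2` if `p ≤ 3`, and locally Lipschitz with constant growing like
`x ^ (p - 3)` if `p ≥ 3`.
-/

open Set

section RealPowers

variable {x y a : ℝ}

theorem abs_rpow_mul_sq (x : ℝ) (ha : 0 ≤ a) : |x| ^ a * x ^ 2 = |x| ^ (a + 2) := by
  rw [← sq_abs, Real.rpow_add_of_nonneg (abs_nonneg x) ha zero_le_two, Real.rpow_two]

theorem add_rpow_le_two_rpow_mul_add_rpow (hx : 0 ≤ x) (hy : 0 ≤ y) (ha : 0 ≤ a) :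
    (x + y) ^ a ≤ 2 ^ a * (x ^ a + y ^ a) := by
  have add_le_two_mul_max : x + y ≤ 2 * max x y := by
    linarith [le_max_left x y, le_max_right x y]
  calc (x + y) ^ a ≤ (2 * max x y) ^ a := by gcongr
    _ = 2 ^ a * max (x ^ a) (y ^ a) := by
      rw [Real.mul_rpow zero_le_two (le_max_of_le_left hx), Real.rpow_max hx hy ha]
    _ ≤ 2 ^ a * (x ^ a + y ^ a) := by
      gcongr
      exact max_le_add_of_nonneg (by positivity) (by positivity)

theorem abs_rpow_sub_rpow_le_abs_sub_rpow (hx : 0 ≤ x) (hy : 0 ≤ y) (ha : 0 ≤ a) (ha1 : a ≤ 1) :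
    |x ^ a - y ^ a| ≤ |x - y| ^ a := by
  wlog hyx : y ≤ x generalizing x y
  · rw [abs_sub_comm, abs_sub_comm x]
    exact this hy hx (le_of_not_ge hyx)
  have subadditive := Real.rpow_add_le_add_rpow hy (sub_nonneg.2 hyx) ha ha1
  rw [add_sub_cancel] at subadditive
  rw [abs_of_nonneg (sub_nonneg.2 (Real.rpow_le_rpow hy hyx ha)),
    abs_of_nonneg (sub_nonneg.2 hyx)]
  linarith

theorem abs_rpow_sub_rpow_le_mul_max_rpow_mul_abs_sub (hx : 0 ≤ x) (hy : 0 ≤ y) (ha : 1 ≤ a) :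
    |x ^ a - y ^ a| ≤ a * max x y ^ (a - 1) * |x - y| := by
  have deriv_bound : ∀ t ∈ Icc 0 (max x y), ‖a * t ^ (a - 1)‖ ≤ a * max x y ^ (a - 1) := by
    rintro t ⟨ht0, ht⟩
    rw [Real.norm_of_nonneg (by positivity)]
    gcongr
  exact (convex_Icc 0 (max x y)).norm_image_sub_le_of_norm_hasDerivWithin_le
    (fun t _ ↦ (Real.hasDerivAt_rpow_const (Or.inr ha)).hasDerivWithinAt) deriv_bound
    ⟨hy, le_max_right x y⟩ ⟨hx, le_max_left x y⟩

theorem abs_rpow_sub_rpow_le_mul_rpow_mul_abs_sub_add (hx : 0 ≤ x) (hy : 0 ≤ y) (ha : 1 ≤ a) :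
    |x ^ a - y ^ a| ≤ a * 2 ^ (a - 1) * (y ^ (a - 1) * |x - y| + |x - y| ^ a) := by
  have max_le_add : max x y ≤ y + |x - y| :=
    max_le (by linarith [le_abs_self (x - y)]) (by linarith [abs_nonneg (x - y)])
  have ha' : 0 ≤ a - 1 := sub_nonneg.2 ha
  calc |x ^ a - y ^ a| ≤ a * max x y ^ (a - 1) * |x - y| :=
        abs_rpow_sub_rpow_le_mul_max_rpow_mul_abs_sub hx hy ha
    _ ≤ a * (y + |x - y|) ^ (a - 1) * |x - y| := by gcongr
    _ ≤ a * (2 ^ (a - 1) * (y ^ (a - 1) + |x - y| ^ (a - 1))) * |x - y| := by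
      gcongr
      exact add_rpow_le_two_rpow_mul_add_rpow hy (abs_nonneg _) ha'
    _ = a * 2 ^ (a - 1) * (y ^ (a - 1) * |x - y| + |x - y| ^ (a - 1) * |x - y|) := by ring
    _ = a * 2 ^ (a - 1) * (y ^ (a - 1) * |x - y| + |x - y| ^ a) := by
      rw [← Real.rpow_add_one' (abs_nonneg _) (by linarith), sub_add_cancel]

theorem exists_abs_rpow_sub_rpow_le (ha : 0 ≤ a) :
    ∃ C : ℝ, 0 < C ∧ ∀ x y : ℝ, 0 ≤ x → 0 ≤ y →
      |x ^ a - y ^ a| ≤ C * (y ^ max 0 (a - 1) * |x - y| ^ min a 1 + |x - y| ^ a) := by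
  rcases le_total a 1 with ha1 | ha1
  · refine ⟨1, one_pos, fun x y hx hy ↦ ?_⟩
    rw [one_mul]
    exact (abs_rpow_sub_rpow_le_abs_sub_rpow hx hy ha ha1).trans
      (le_add_of_nonneg_left (by positivity))
  · refine ⟨a * 2 ^ (a - 1), by positivity, fun x y hx hy ↦ ?_⟩
    rw [max_eq_right (sub_nonneg.2 ha1), min_eq_right ha1, Real.rpow_one]
    exact abs_rpow_sub_rpow_le_mul_rpow_mul_abs_sub_add hx hy ha1

end RealPowers

section TaylorRemainder

variable {p v w : ℝ}

/-- The error in recovering `f v`, where `f x = (2 / p) * x ^ p`, from the second-order Taylor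
expansion of `f` at `v + w`, with `f''` evaluated at `v` instead of at `v + w`. -/
noncomputable def rpowTaylorRemainder (p v w : ℝ) : ℝ :=
  2 / p * v ^ p - (p - 1) * v ^ (p - 2) * w ^ 2 + 2 * (v + w) ^ (p - 1) * w - 2 / p * (v + w) ^ p

theorem rpowTaylorRemainder_zero_right (p v : ℝ) : rpowTaylorRemainder p v 0 = 0 := by
  simp [rpowTaylorRemainder]

theorem hasDerivAt_rpowTaylorRemainder (hp : 2 ≤ p) (v w : ℝ) :
    HasDerivAt (rpowTaylorRemainder p v)
      (2 * (p - 1) * w * ((v + w) ^ (p - 2) - v ^ (p - 2))) w := by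
  have hasDerivAt_add_rpow (q : ℝ) (hq : 1 ≤ q) :
      HasDerivAt (fun t ↦ (v + t) ^ q) (q * (v + w) ^ (q - 1)) w := by
    simpa using ((hasDerivAt_id w).const_add v).rpow_const (p := q) (Or.inr hq)
  have hasDerivAt_quadratic :=
    (((hasDerivAt_id w).pow 2).const_mul ((p - 1) * v ^ (p - 2))).const_sub (2 / p * v ^ p)
  have hasDerivAt_linear :=
    ((hasDerivAt_add_rpow (p - 1) (by linarith)).const_mul 2).mul (hasDerivAt_id w)
  have hasDerivAt_power := (hasDerivAt_add_rpow p (by linarith)).const_mul (2 / p)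
  refine ((hasDerivAt_quadratic.add hasDerivAt_linear).sub hasDerivAt_power).congr_deriv ?_
  have hp0 : p ≠ 0 := by linarith
  rw [show p - 1 - 1 = p - 2 by ring]
  simp only [id]
  field_simp
  ring

theorem abs_rpowTaylorRemainder_le_of_abs_rpow_sub_le {K : ℝ} (hp : 2 ≤ p)
    (hK : ∀ t ∈ uIcc 0 w, |(v + t) ^ (p - 2) - v ^ (p - 2)| ≤ K) :
    |rpowTaylorRemainder p v w| ≤ 2 * (p - 1) * K * w ^ 2 := by
  have hp1 : 0 ≤ 2 * (p - 1) := by linarith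
  have deriv_bound : ∀ t ∈ uIcc 0 w,
      ‖2 * (p - 1) * t * ((v + t) ^ (p - 2) - v ^ (p - 2))‖ ≤ 2 * (p - 1) * |w| * K := by
    intro t ht
    have abs_t_le : |t| ≤ |w| := by simpa using abs_sub_left_of_mem_uIcc ht
    rw [Real.norm_eq_abs, abs_mul, abs_mul, abs_of_nonneg hp1]
    gcongr
    exact hK t ht
  have mean_value := (convex_uIcc 0 w).norm_image_sub_le_of_norm_hasDerivWithin_le
    (fun t _ ↦ (hasDerivAt_rpowTaylorRemainder hp v t).hasDerivWithinAt) deriv_bound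
    left_mem_uIcc right_mem_uIcc
  rw [rpowTaylorRemainder_zero_right, sub_zero, sub_zero, Real.norm_eq_abs, Real.norm_eq_abs]
    at mean_value
  calc |rpowTaylorRemainder p v w| ≤ 2 * (p - 1) * |w| * K * |w| := mean_value
    _ = 2 * (p - 1) * K * |w| ^ 2 := by ring
    _ = 2 * (p - 1) * K * w ^ 2 := by rw [sq_abs]

theorem stmt_15_general (hp : 2 ≤ p) :
    ∃ C : ℝ, 0 < C ∧ ∀ v w : ℝ, 0 ≤ v → 0 ≤ v + w →
      |2 / p * v ^ p - (p - 1) * v ^ (p - 2) * w ^ 2 + 2 * (v + w) ^ (p - 1) * w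
          - 2 / p * (v + w) ^ p|
        ≤ C * v ^ max 0 (p - 3) * |w| ^ min p 3 + C * |w| ^ p := by
  have ha : 0 ≤ p - 2 := sub_nonneg.2 hp
  obtain ⟨C, hC, power_bound⟩ := exists_abs_rpow_sub_rpow_le ha
  refine ⟨2 * (p - 1) * C, mul_pos (by linarith) hC, fun v w hv hvw ↦ ?_⟩
  have increment_bound : ∀ t ∈ uIcc 0 w, |(v + t) ^ (p - 2) - v ^ (p - 2)|
      ≤ C * (v ^ max 0 (p - 2 - 1) * |w| ^ min (p - 2) 1 + |w| ^ (p - 2)) := by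
    intro t ht
    have abs_t_le : |t| ≤ |w| := by simpa using abs_sub_left_of_mem_uIcc ht
    have hvt : 0 ≤ v + t := by rcases mem_uIcc.1 ht with h | h <;> linarith [h.1]
    refine (power_bound (v + t) v hvt hv).trans ?_
    rw [add_sub_cancel_left]
    gcongr
  have min_add_two : min (p - 2) 1 + 2 = min p 3 := by
    rw [← min_add_add_right, sub_add_cancel]; norm_num
  calc |rpowTaylorRemainder p v w|
    _ ≤ 2 * (p - 1) * (C * (v ^ max 0 (p - 2 - 1) * |w| ^ min (p - 2) 1 + |w| ^ (p - 2))) * w ^ 2 :=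
      abs_rpowTaylorRemainder_le_of_abs_rpow_sub_le hp increment_bound
    _ = 2 * (p - 1) * C * v ^ max 0 (p - 2 - 1) * (|w| ^ min (p - 2) 1 * w ^ 2)
        + 2 * (p - 1) * C * (|w| ^ (p - 2) * w ^ 2) := by ring
    _ = 2 * (p - 1) * C * v ^ max 0 (p - 3) * |w| ^ min p 3 + 2 * (p - 1) * C * |w| ^ p := by
      rw [abs_rpow_mul_sq w (le_min ha zero_le_one), abs_rpow_mul_sq w ha, min_add_two,
        sub_add_cancel, show p - 2 - 1 = p - 3 by ring]

end TaylorRemainder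

section TraceExponent

variable {n : ℝ}

/-- The critical exponent `2(n-1)/(n-2)` of the Sobolev trace embedding in dimension `n`,
for real `n`. -/
noncomputable def traceExponent (n : ℝ) : ℝ :=
  2 * (n - 1) / (n - 2)

theorem two_lt_traceExponent (hn : 2 < n) : 2 < traceExponent n := by
  rw [traceExponent, lt_div_iff₀ (sub_pos.2 hn)]
  linarith

theorem traceExponent_sub_one (hn : n ≠ 2) : traceExponent n - 1 = n / (n - 2) := by
  have := sub_ne_zero.2 hn
  rw [traceExponent]
  field_simp
  ring

theorem traceExponent_sub_two (hn : n ≠ 2) : traceExponent n - 2 = 2 / (n - 2) := by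
  have := sub_ne_zero.2 hn
  rw [traceExponent]
  field_simp
  ring

theorem two_div_traceExponent (n : ℝ) : 2 / traceExponent n = (n - 2) / (n - 1) := by
  rw [traceExponent, div_div_eq_mul_div, mul_div_mul_left _ _ two_ne_zero]

end TraceExponent

/-- with `p = 2(n−1)/(n−2)` there is `C = C(n)` such that for all `v ≥ 0` and
`w ∈ ℝ` with `v + w ≥ 0`,
`| ((n−2)/(n−1)) v^p − (n/(n−2)) v^{2/(n−2)} w² + 2 (v+w)^{n/(n−2)} w − ((n−2)/(n−1)) (v+w)^p |
≤ C v^{max{0,p−3}} |w|^{min{p,3}} + C |w|^p`. -/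
theorem stmt_15 (n : ℕ) (hn : 3 ≤ n) :
    ∃ C : ℝ, 0 < C ∧ ∀ v w : ℝ, 0 ≤ v → 0 ≤ v + w →
      |((n : ℝ) - 2) / ((n : ℝ) - 1) * v ^ (2 * ((n : ℝ) - 1) / ((n : ℝ) - 2))
          - (n : ℝ) / ((n : ℝ) - 2) * v ^ (2 / ((n : ℝ) - 2)) * w ^ 2
          + 2 * (v + w) ^ ((n : ℝ) / ((n : ℝ) - 2)) * w
          - ((n : ℝ) - 2) / ((n : ℝ) - 1) * (v + w) ^ (2 * ((n : ℝ) - 1) / ((n : ℝ) - 2))|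
        ≤ C * v ^ max (0 : ℝ) (2 * ((n : ℝ) - 1) / ((n : ℝ) - 2) - 3)
              * |w| ^ min (2 * ((n : ℝ) - 1) / ((n : ℝ) - 2)) (3 : ℝ)
          + C * |w| ^ (2 * ((n : ℝ) - 1) / ((n : ℝ) - 2)) := by
  have hn2 : (2 : ℝ) < n := by exact_mod_cast hn
  have bound := stmt_15_general (two_lt_traceExponent hn2).le
  rw [two_div_traceExponent, traceExponent_sub_one hn2.ne', traceExponent_sub_two hn2.ne'] at bound
  exact bound
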